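/- Focused decomposition lemma: There exists N such that for every n ≥ N the following holds with m = n^256 (so √m = n^128 is an integer). Let I ⊆ [n] be nonempty, let X ⊆ [m]^I be nonempty and 0.9-essentially-dense, and let Y ⊆ ({0,1}^m)^I be nonempty with |I|·m − log₂|Y| ≤ n³ + 1. Then the product of the uniform distributions on X and on Y can be written as a finite mixture Σ_{d∈D} μ(d) · (x^d × y^d), where μ is a probability distribution on a finite set D and each x^d × y^d is a product of a distribution x^d on [m]^I and a distribution y^d on ({0,1}^m)^I, such that Σ{μ(d) : x^d × y^d is focused} ≥ 1 − (1/2) · n^(−5|I|). -/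

import Mathlib

open Finset

/-- The bucket index of `j ∈ [m]` where `m = n^256` is partitioned into `√m = n^128`
consecutive buckets of size `√m = n^128` each. -/
def bucket (n : ℕ) (j : Fin (n ^ 256)) : Fin (n ^ 128) :=
  ⟨j.val / n ^ 128, by
    have hj := j.isLt
    have hn : 0 < n := by
      rcases Nat.eq_zero_or_pos n with rfl | h
      · exact absurd hj (by norm_num)
      · exact h
    have h256 : n ^ 256 = n ^ 128 * n ^ 128 := by ring
    exact Nat.div_lt_of_lt_mul (h256 ▸ hj)⟩

/-- The product distribution `x × y` (given by pmfs `px`, `py` over `[m]^I` resp.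
`({0,1}^m)^I`, with `m = n^256`) is *focused*: there is a partial assignment
`σ ∈ {0,1,*}^I` (encoded by `Option Bool`, `none` = `*`) with free set `I' = σ⁻¹(*)` and
bucket indices `ℓᵢ` such that `|I'| ≥ |I|/2`; the gadget outputs agree with `σ` on
`I ∖ I'` with probability 1; for `i ∈ I'` the pointer `xᵢ` lies in bucket `T_{ℓᵢ}` with
probability 1; `Pr[x_{I'} = a] ≤ (√m)^(−0.4|I'|)` for every `a`; and
`Pr[y_T = γ] ≤ 2·2^(−|I'|·√m)` for every `γ`, where `T = ⋃_{i∈I'} {i} × T_{ℓᵢ}`. -/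
def Focused (n : ℕ) (I : Finset (Fin n))
    (px : ({i // i ∈ I} → Fin (n ^ 256)) → ℝ)
    (py : ({i // i ∈ I} → Fin (n ^ 256) → Bool) → ℝ) : Prop :=
  ∃ (σ : {i // i ∈ I} → Option Bool) (ℓ : {i // i ∈ I} → Fin (n ^ 128)),
    I.card ≤ 2 * (Finset.univ.filter fun i => σ i = none).card ∧
    (∀ x, px x ≠ 0 → ∀ y, py y ≠ 0 → ∀ i, ∀ b : Bool, σ i = some b → y i (x i) = b) ∧
    (∀ x, px x ≠ 0 → ∀ i, σ i = none → bucket n (x i) = ℓ i) ∧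
    (∀ a : {i // i ∈ I} → Fin (n ^ 256),
      ∑ x ∈ Finset.univ.filter
          (fun x : {i // i ∈ I} → Fin (n ^ 256) => ∀ i, σ i = none → x i = a i), px x ≤
        ((n ^ 128 : ℕ) : ℝ) ^
          (-(0.4 * (((Finset.univ.filter fun i => σ i = none).card : ℝ))))) ∧
    (∀ γ : {i // i ∈ I} → Fin (n ^ 256) → Bool,
      ∑ y ∈ Finset.univ.filter
          (fun y : {i // i ∈ I} → Fin (n ^ 256) → Bool =>
            ∀ i, σ i = none → ∀ j, bucket n j = ℓ i → y i j = γ i j), py y ≤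
        2 * (2 : ℝ) ^
          (-((((Finset.univ.filter fun i => σ i = none).card : ℝ)) * ((n ^ 128 : ℕ) : ℝ))))

/-!
Fix blocks of the tables `y` as long as this can be done without losing more than the density
`blockDensity n` per block. A maximal such choice leaves the unfixed blocks dense, and in a set of
tables that misses at most `n ^ 4` bits at most `n ^ 5` blocks get fixed, since each of them gains
`1 / n` bit. Peeling off such subsets exhausts `Y` up to a negligible rest. For each of them, split
`X` by the names of the blocks that are pointed to, and by the pointers themselves where these
blocks are fixed. A typical part is still large, and because the fixed blocks cover few entries,
density of `X` prevents half of the pointers from falling into them, except for few `x`. Thus all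
but a small mass of the resulting rectangles are focused.
-/

section UniformMass

variable {A B : Type*}

/-- The probability mass function of the uniform distribution on the finite set `P`, as a
real-valued function; it is identically zero when `P` is empty. -/
noncomputable def uniformMass (P : Finset A) : A → ℝ :=
  (P : Set A).indicator fun _ => (#P : ℝ)⁻¹

lemma uniformMass_nonneg (P : Finset A) (a : A) : 0 ≤ uniformMass P a :=
  Set.indicator_nonneg (fun _ _ => by positivity) a

lemma mem_of_uniformMass_ne_zero {P : Finset A} {a : A} (h : uniformMass P a ≠ 0) : a ∈ P :=
  Set.mem_of_indicator_ne_zero h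

lemma card_mul_uniformMass (P : Finset A) (a : A) :
    #P * uniformMass P a = (P : Set A).indicator 1 a := by
  by_cases ha : a ∈ P
  · simp [uniformMass, ha, ne_empty_of_mem ha]
  · simp [uniformMass, ha]

lemma sum_filter_uniformMass [Fintype A] (P : Finset A) (p : A → Prop) [DecidablePred p] :
    ∑ a with p a, uniformMass P a = #{a ∈ P | p a} / #P := by
  classical
  simp [uniformMass, Set.indicator_apply, sum_ite_mem, div_eq_mul_inv,
    filter_inter, univ_inter]

lemma sum_uniformMass [Fintype A] {P : Finset A} (hP : P.Nonempty) :
    ∑ a, uniformMass P a = 1 := by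
  have hcard : (#P : ℝ) ≠ 0 := by exact_mod_cast hP.card_ne_zero
  simpa [hcard] using sum_filter_uniformMass P fun _ => True

lemma sum_filter_uniformMass_le_inv_card [Fintype A] {P : Finset A} {p : A → Prop}
    [DecidablePred p] (h : ∀ a ∈ P, ∀ b ∈ P, p a → p b → a = b) :
    ∑ a with p a, uniformMass P a ≤ (#P : ℝ)⁻¹ := by
  have hle : #{a ∈ P | p a} ≤ 1 := card_le_one.2 fun a ha b hb =>
    h a (mem_filter.1 ha).1 b (mem_filter.1 hb).1
      (mem_filter.1 ha).2 (mem_filter.1 hb).2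
  rw [sum_filter_uniformMass, inv_eq_one_div]
  gcongr
  exact_mod_cast hle

lemma uniformMass_mul_uniformMass (X : Finset A) (Y : Finset B) (a : A) (b : B)
    [Decidable (a ∈ X ∧ b ∈ Y)] :
    uniformMass X a * uniformMass Y b = if a ∈ X ∧ b ∈ Y then 1 / ((#X : ℝ) * #Y) else 0 := by
  by_cases ha : a ∈ X <;> by_cases hb : b ∈ Y <;>
    simp [uniformMass, ha, hb, mul_comm]

variable [DecidableEq A] [DecidableEq B]

lemma sum_parts_card_mul_uniformMass {X : Finset A} (𝒳 : Finpartition X) (a : A) :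
    ∑ P ∈ 𝒳.parts, #P * uniformMass P a = #X * uniformMass X a := by
  simp_rw [card_mul_uniformMass]
  by_cases ha : a ∈ X
  · obtain ⟨P, ⟨hP, haP⟩, hunique⟩ := 𝒳.existsUnique_mem ha
    rw [sum_eq_single_of_mem P hP fun R hR hne =>
      Set.indicator_of_notMem (fun haR => hne (hunique R ⟨hR, haR⟩)) _]
    simp [ha, haP]
  · rw [Set.indicator_of_notMem ha]
    exact sum_eq_zero fun P hP =>
      Set.indicator_of_notMem (fun haP => ha (𝒳.subset hP haP)) _

lemma sum_parts_card_mul_card {X : Finset A} {Y : Finset B} (𝒴 : Finpartition Y)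
    (𝒳 : Finset B → Finpartition X) :
    ∑ Q ∈ 𝒴.parts, ∑ P ∈ (𝒳 Q).parts, (#P * #Q : ℝ) = #X * #Y := by
  simp_rw [← sum_mul, ← Nat.cast_sum, Finpartition.sum_card_parts, ← mul_sum,
    ← Nat.cast_sum, Finpartition.sum_card_parts]

lemma sum_parts_mul_uniformMass_mul_uniformMass {X : Finset A} {Y : Finset B} (hX : X.Nonempty)
    (hY : Y.Nonempty) (𝒴 : Finpartition Y) (𝒳 : Finset B → Finpartition X) (a : A) (b : B) :
    ∑ Q ∈ 𝒴.parts, ∑ P ∈ (𝒳 Q).parts,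
        (#P * #Q / (#X * #Y) * (uniformMass P a * uniformMass Q b) : ℝ) =
      uniformMass X a * uniformMass Y b := by
  have hXcard : (#X : ℝ) ≠ 0 := by exact_mod_cast hX.card_ne_zero
  have hYcard : (#Y : ℝ) ≠ 0 := by exact_mod_cast hY.card_ne_zero
  calc ∑ Q ∈ 𝒴.parts, ∑ P ∈ (𝒳 Q).parts,
        (#P * #Q / (#X * #Y) * (uniformMass P a * uniformMass Q b) : ℝ)
      = ∑ Q ∈ 𝒴.parts, (∑ P ∈ (𝒳 Q).parts, #P * uniformMass P a) *
          (#Q * uniformMass Q b) / (#X * #Y) := by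
        refine sum_congr rfl fun Q _ => ?_
        rw [sum_mul, sum_div]
        exact sum_congr rfl fun P _ => by ring
    _ = (#X * uniformMass X a) * (#Y * uniformMass Y b) / (#X * #Y) := by
        simp_rw [sum_parts_card_mul_uniformMass]
        rw [← sum_div, ← mul_sum, sum_parts_card_mul_uniformMass]
    _ = uniformMass X a * uniformMass Y b := by field_simp [hXcard, hYcard]

open Classical in
theorem exists_mixture_of_finpartition [Fintype A] [Fintype B] {X : Finset A} {Y : Finset B}
    (hX : X.Nonempty) (hY : Y.Nonempty) (𝒴 : Finpartition Y) (𝒳 : Finset B → Finpartition X)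
    (Good : (A → ℝ) → (B → ℝ) → Prop) {ε : ℝ}
    (hε : ∑ Q ∈ 𝒴.parts, ∑ P ∈ (𝒳 Q).parts with ¬ Good (uniformMass P) (uniformMass Q),
      (#P * #Q : ℝ) ≤ ε * (#X * #Y)) :
    ∃ (k : ℕ) (μ : Fin k → ℝ) (px : Fin k → A → ℝ) (py : Fin k → B → ℝ),
      (∀ d, 0 ≤ μ d) ∧ (∑ d, μ d = 1) ∧
      (∀ d a, 0 ≤ px d a) ∧ (∀ d, ∑ a, px d a = 1) ∧
      (∀ d b, 0 ≤ py d b) ∧ (∀ d, ∑ b, py d b = 1) ∧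
      (∀ a b, ∑ d, μ d * (px d a * py d b) = uniformMass X a * uniformMass Y b) ∧
      1 - ε ≤ ∑ d with Good (px d) (py d), μ d := by
  have hXcard : (0 : ℝ) < #X := by exact_mod_cast hX.card_pos
  have hYcard : (0 : ℝ) < #Y := by exact_mod_cast hY.card_pos
  let pieces := 𝒴.parts.sigma fun Q => (𝒳 Q).parts
  let piece : Fin #pieces → pieces := pieces.equivFin.symm
  have hsum (g : Finset A → Finset B → ℝ) :
      ∑ d, g (piece d).1.2 (piece d).1.1 = ∑ Q ∈ 𝒴.parts, ∑ P ∈ (𝒳 Q).parts, g P Q := by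
    rw [Equiv.sum_comp pieces.equivFin.symm fun R => g R.1.2 R.1.1,
      sum_coe_sort pieces fun R => g R.2 R.1, sum_sigma]
  have hmem (d) := mem_sigma.1 (piece d).2
  refine ⟨#pieces, fun d => #(piece d).1.2 * #(piece d).1.1 / (#X * #Y),
    fun d => uniformMass (piece d).1.2, fun d => uniformMass (piece d).1.1,
    fun d => by positivity, ?_,
    fun d => uniformMass_nonneg _,
    fun d => sum_uniformMass ((𝒳 _).nonempty_of_mem_parts (hmem d).2),
    fun d => uniformMass_nonneg _, fun d => sum_uniformMass (𝒴.nonempty_of_mem_parts (hmem d).1),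
    fun a b => ?_, ?_⟩
  · rw [hsum fun P Q => #P * #Q / (#X * #Y)]
    simp_rw [← sum_div]
    rw [sum_parts_card_mul_card, div_self (by positivity)]
  · rw [hsum fun P Q => #P * #Q / (#X * #Y) * (uniformMass P a * uniformMass Q b)]
    exact sum_parts_mul_uniformMass_mul_uniformMass hX hY 𝒴 𝒳 a b
  · rw [sum_filter, hsum fun P Q => if Good (uniformMass P) (uniformMass Q) then
      #P * #Q / (#X * #Y) else 0]
    simp_rw [← sum_filter, ← sum_div]
    rw [le_div_iff₀ (by positivity), sub_mul, one_mul, ← sum_parts_card_mul_card 𝒴 𝒳,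
      sub_le_iff_le_add]
    rw [← sum_parts_card_mul_card 𝒴 𝒳] at hε
    refine le_trans (le_of_eq ?_) (add_le_add_right hε _)
    rw [← sum_add_distrib]
    exact sum_congr rfl fun Q _ => (sum_filter_add_sum_filter_not _ _ _).symm

end UniformMass

section Finpartition

variable {A B : Type*} [DecidableEq A] [DecidableEq B]

lemma exists_finpartition_of_fibers {K : Type*} [DecidableEq K] (f : A → K) (X : Finset A) :
    ∃ 𝒳 : Finpartition X, #𝒳.parts ≤ #(X.image f) ∧
      ∀ P ∈ 𝒳.parts, ∀ x ∈ P, ∀ x' ∈ P, f x = f x' := by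
  classical
  refine ⟨.ofSetSetoid (Setoid.ker f) X, ?_, ?_⟩
  · have hparts : (Finpartition.ofSetSetoid (Setoid.ker f) X).parts =
        (X.image f).image fun k => {x ∈ X | k = f x} := by
      rw [image_image]; rfl
    exact hparts ▸ card_image_le
  · rintro P hP x hx x' hx'
    obtain ⟨a, -, rfl⟩ := mem_image.1 hP
    exact (mem_filter.1 hx).2.symm.trans (mem_filter.1 hx').2

lemma exists_finpartition_sum_card_le {p : Finset B → Prop} [DecidablePred p] {c : ℝ}
    {Y : Finset B} (h : ∀ Z ⊆ Y, c < #Z → ∃ Z' ⊆ Z, Z'.Nonempty ∧ p Z') :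
    ∃ 𝒴 : Finpartition Y, ∑ Q ∈ 𝒴.parts with ¬ p Q, (#Q : ℝ) ≤ c := by
  induction Y using strongInduction with
  | H Y ih =>
    by_cases hY : c < #Y
    · obtain ⟨Z, hZY, hZ, hpZ⟩ := h Y subset_rfl hY
      obtain ⟨𝒴, h𝒴⟩ := ih (Y \ Z) (sdiff_ssubset hZY hZ) fun W hW =>
        h W (hW.trans sdiff_subset)
      refine ⟨𝒴.extend hZ.ne_empty sdiff_disjoint (sdiff_union_of_subset hZY), ?_⟩
      rwa [Finpartition.extend_parts, filter_insert, if_neg (not_not.2 hpZ)]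
    · refine ⟨⊤, ?_⟩
      calc ∑ Q ∈ (⊤ : Finpartition Y).parts with ¬ p Q, (#Q : ℝ)
          ≤ ∑ Q ∈ (⊤ : Finpartition Y).parts, (#Q : ℝ) :=
            sum_le_sum_of_subset_of_nonneg (filter_subset _ _)
              fun _ _ _ => Nat.cast_nonneg _
        _ = #Y := by rw [← Nat.cast_sum, Finpartition.sum_card_parts]
        _ ≤ c := not_lt.1 hY

lemma sum_card_inter_parts_le {X : Finset A} (𝒳 : Finpartition X) (T : Finset A) :
    ∑ P ∈ 𝒳.parts, #(T ∩ P) ≤ #T := by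
  simpa using sum_card_inter_le (s := T) (B := 𝒳.parts) (n := 1) fun a _ =>
    card_le_one.2 fun P hP Q hQ =>
      𝒳.eq_of_mem_parts (mem_filter.1 hP).1 (mem_filter.1 hQ).1
        (mem_filter.1 hP).2 (mem_filter.1 hQ).2

lemma sum_card_parts_not_le {X : Finset A} (𝒳 : Finpartition X) {p : Finset A → Prop}
    [DecidablePred p] {τ : ℝ} (hτ : 0 ≤ τ) {T : Finset A}
    (h : ∀ P ∈ 𝒳.parts, τ ≤ #P → ¬ P ⊆ T → p P) :
    ∑ P ∈ 𝒳.parts with ¬ p P, (#P : ℝ) ≤ #𝒳.parts * τ + #T := by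
  have hpart (P) (hP : P ∈ 𝒳.parts) (hpP : ¬ p P) : (#P : ℝ) ≤ τ + #(T ∩ P) := by
    by_cases hPT : P ⊆ T
    · rw [inter_eq_right.2 hPT]; linarith
    · have hlt : (#P : ℝ) < τ := not_le.1 fun hle => hpP (h P hP hle hPT)
      exact hlt.le.trans (le_add_of_nonneg_right (Nat.cast_nonneg _))
  calc ∑ P ∈ 𝒳.parts with ¬ p P, (#P : ℝ)
      ≤ ∑ P ∈ 𝒳.parts with ¬ p P, (τ + #(T ∩ P) : ℝ) :=
        sum_le_sum fun P hP =>
          hpart P (mem_filter.1 hP).1 (mem_filter.1 hP).2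
    _ ≤ ∑ P ∈ 𝒳.parts, (τ + #(T ∩ P) : ℝ) :=
        sum_le_sum_of_subset_of_nonneg (filter_subset _ _) fun _ _ _ => by positivity
    _ = #𝒳.parts * τ + ((∑ P ∈ 𝒳.parts, #(T ∩ P) : ℕ) : ℝ) := by
        rw [sum_add_distrib, sum_const, nsmul_eq_mul, Nat.cast_sum]
    _ ≤ #𝒳.parts * τ + #T := by
        gcongr
        exact sum_card_inter_parts_le 𝒳 T

lemma sum_parts_card_mul_card_not_le {X : Finset A} {Y : Finset B} (𝒴 : Finpartition Y)
    (𝒳 : Finset B → Finpartition X) {p : Finset B → Prop} {q : Finset A → Finset B → Prop}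
    [DecidablePred p] [∀ Q, DecidablePred (q · Q)] {a c : ℝ} (ha : 0 ≤ a)
    (h𝒴 : ∑ Q ∈ 𝒴.parts with ¬ p Q, (#Q : ℝ) ≤ c)
    (h𝒳 : ∀ Q, p Q → ∑ P ∈ (𝒳 Q).parts with ¬ q P Q, (#P : ℝ) ≤ a) :
    ∑ Q ∈ 𝒴.parts, ∑ P ∈ (𝒳 Q).parts with ¬ q P Q, (#P * #Q : ℝ) ≤ a * #Y + #X * c := by
  have hall (Q) : ∑ P ∈ (𝒳 Q).parts with ¬ q P Q, (#P : ℝ) ≤ #X := by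
    rw [← (𝒳 Q).sum_card_parts, Nat.cast_sum]
    exact sum_le_sum_of_subset_of_nonneg (filter_subset _ _)
      fun _ _ _ => Nat.cast_nonneg _
  have hpart (Q) : ∑ P ∈ (𝒳 Q).parts with ¬ q P Q, (#P * #Q : ℝ) ≤
      a * #Q + if ¬ p Q then #X * (#Q : ℝ) else 0 := by
    rw [← sum_mul]
    split_ifs with hQ
    · rw [add_zero]
      exact mul_le_mul_of_nonneg_right (h𝒳 Q hQ) (Nat.cast_nonneg _)
    · have := mul_le_mul_of_nonneg_right (hall Q) (Nat.cast_nonneg (α := ℝ) #Q)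
      have : 0 ≤ a * (#Q : ℝ) := by positivity
      linarith
  calc ∑ Q ∈ 𝒴.parts, ∑ P ∈ (𝒳 Q).parts with ¬ q P Q, (#P * #Q : ℝ)
      ≤ ∑ Q ∈ 𝒴.parts, (a * #Q + if ¬ p Q then #X * (#Q : ℝ) else 0) :=
        sum_le_sum fun Q _ => hpart Q
    _ = a * #Y + #X * ∑ Q ∈ 𝒴.parts with ¬ p Q, (#Q : ℝ) := by
        rw [sum_add_distrib, ← mul_sum, ← Nat.cast_sum, 𝒴.sum_card_parts,
          ← sum_filter, mul_sum]
    _ ≤ a * #Y + #X * c := by gcongr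

end Finpartition

section Blocks

variable {ι J Q α : Type*}

/-- Every block of `F` is constant on `T`: here each of the tables `y i : J → α` is cut into
blocks by `β : J → Q`, and `(i, q)` stands for the block `q` of the table `y i`. -/
def ConstantOnBlocks (β : J → Q) (F : Finset (ι × Q)) (T : Finset (ι → J → α)) : Prop :=
  ∀ y ∈ T, ∀ y' ∈ T, ∀ i j, (i, β j) ∈ F → y i j = y' i j

/-- Outside the blocks of `F`, a uniformly random element of `Y` takes any prescribed values on
`k` blocks with probability at most `ρ ^ k`. -/
def BlockDense (β : J → Q) (ρ : ℝ) (F : Finset (ι × Q)) (Y : Finset (ι → J → α)) : Prop :=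
  ∀ C, Disjoint F C → ∀ T ⊆ Y, ConstantOnBlocks β C T → (#T : ℝ) ≤ #Y * ρ ^ #C

lemma constantOnBlocks_empty (β : J → Q) (T : Finset (ι → J → α)) : ConstantOnBlocks β ∅ T :=
  fun _ _ _ _ _ _ h => absurd h (notMem_empty _)

lemma ConstantOnBlocks.mono {β : J → Q} {F : Finset (ι × Q)} {T Z : Finset (ι → J → α)}
    (hZ : ConstantOnBlocks β F Z) (hTZ : T ⊆ Z) : ConstantOnBlocks β F T :=
  fun y hy y' hy' => hZ y (hTZ hy) y' (hTZ hy')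

lemma ConstantOnBlocks.union [DecidableEq ι] [DecidableEq Q] {β : J → Q} {F C : Finset (ι × Q)}
    {T : Finset (ι → J → α)} (hF : ConstantOnBlocks β F T) (hC : ConstantOnBlocks β C T) :
    ConstantOnBlocks β (F ∪ C) T := fun y hy y' hy' i j hij =>
  (mem_union.1 hij).elim (hF y hy y' hy' i j) (hC y hy y' hy' i j)

theorem exists_subset_blockDense [Finite ι] [Finite Q] (β : J → Q) {ρ : ℝ} (hρ : 0 ≤ ρ)
    (Y : Finset (ι → J → α)) :
    ∃ F, ∃ Z ⊆ Y, ConstantOnBlocks β F Z ∧ #Y * ρ ^ #F ≤ #Z ∧ BlockDense β ρ F Z := by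
  classical
  let heavy : Set (Finset (ι × Q)) :=
    {F | ∃ Z ⊆ Y, ConstantOnBlocks β F Z ∧ #Y * ρ ^ #F ≤ #Z}
  have hheavy : heavy.Nonempty := ⟨∅, Y, subset_rfl, constantOnBlocks_empty β Y, by simp⟩
  obtain ⟨F, ⟨Z, hZY, hFZ, hcard⟩, hmax⟩ := heavy.toFinite.exists_maximal hheavy
  refine ⟨F, Z, hZY, hFZ, hcard, fun C hFC T hTZ hCT => ?_⟩
  by_contra! hlt
  have hunion : F ∪ C ∈ heavy := by
    refine ⟨T, hTZ.trans hZY, (hFZ.mono hTZ).union hCT, ?_⟩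
    calc #Y * ρ ^ #(F ∪ C) = #Y * ρ ^ #F * ρ ^ #C := by
          rw [card_union_of_disjoint hFC, pow_add, mul_assoc]
      _ ≤ #Z * ρ ^ #C := by gcongr
      _ ≤ #T := hlt.le
  have hC : C = ∅ := disjoint_self_iff_empty C |>.1 <|
    hFC.mono_left <| subset_union_right.trans (hmax hunion subset_union_left)
  refine hlt.not_ge ?_
  simpa [hC] using card_le_card hTZ

lemma BlockDense.sum_filter_uniformMass_le [Fintype ι] [Fintype (ι → J → α)]
    {β : J → Q} {ρ : ℝ} {F : Finset (ι × Q)} {Z : Finset (ι → J → α)} (hZ : BlockDense β ρ F Z)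
    (hρ : 0 ≤ ρ) {p : ι → Prop} [DecidablePred p] {ℓ : ι → Q} (hp : ∀ i, p i → (i, ℓ i) ∉ F)
    (δ : ι → J → α) [DecidablePred fun y : ι → J → α => ∀ i, p i → ∀ j, β j = ℓ i → y i j = δ i j] :
    ∑ y with ∀ i, p i → ∀ j, β j = ℓ i → y i j = δ i j, uniformMass Z y ≤ ρ ^ #{i | p i} := by
  classical
  let C : Finset (ι × Q) := ({i | p i} : Finset ι).image fun i => (i, ℓ i)
  have hC {i q} : (i, q) ∈ C ↔ p i ∧ ℓ i = q := by simp [C]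
  have hcardC : #C = #{i | p i} :=
    card_image_of_injective _ fun _ _ h => congrArg Prod.fst h
  have hFC : Disjoint F C := disjoint_left.2 fun ⟨i, q⟩ hF hiC => by
    obtain ⟨hi, rfl⟩ := hC.1 hiC
    exact hp i hi hF
  have hcard := hZ C hFC {y ∈ Z | ∀ i, p i → ∀ j, β j = ℓ i → y i j = δ i j}
    (filter_subset _ _) fun y hy y' hy' i j hij => by
      obtain ⟨hi, hj⟩ := hC.1 hij
      rw [(mem_filter.1 hy).2 i hi j hj.symm, (mem_filter.1 hy').2 i hi j hj.symm]
  rw [sum_filter_uniformMass]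
  refine div_le_of_le_mul₀ (Nat.cast_nonneg _) (by positivity) ?_
  rwa [hcardC, mul_comm] at hcard

lemma sum_card_filter_mem_blocks [Fintype ι] [Fintype J] [DecidableEq ι] [DecidableEq Q]
    {β : J → Q} {S : ℕ} (hβ : ∀ q, #{j | β j = q} = S) (F : Finset (ι × Q)) :
    ∑ i, #{j | (i, β j) ∈ F} = S * #F := by
  calc ∑ i, #{j | (i, β j) ∈ F}
      = #{ij : ι × J | (ij.1, β ij.2) ∈ F} := by
        simp_rw [card_filter, Fintype.sum_prod_type]
    _ = ∑ b ∈ F, #{ij : ι × J | (ij.1, β ij.2) = b} := by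
        rw [card_eq_sum_card_fiberwise (f := fun ij : ι × J => (ij.1, β ij.2))
          (s := {ij | (ij.1, β ij.2) ∈ F}) (t := F) fun ij hij => by simpa using hij]
        refine sum_congr rfl fun b hb => congrArg Finset.card ?_
        ext ij
        simp only [mem_filter, mem_univ, true_and, and_iff_right_iff_imp]
        rintro rfl
        exact hb
    _ = ∑ _b ∈ F, S := by
        refine sum_congr rfl fun b _ => ?_
        have hb : univ.filter (fun ij : ι × J => (ij.1, β ij.2) = b) =
            {b.1} ×ˢ univ.filter fun j => β j = b.2 := by
          ext ij
          simp only [mem_filter, mem_product, mem_singleton, mem_univ,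
            true_and, Prod.ext_iff]
        rw [hb, card_product, card_singleton, one_mul, hβ]
    _ = S * #F := by rw [sum_const, smul_eq_mul, mul_comm]

lemma ConstantOnBlocks.card_mul_pow_le [Fintype ι] [Fintype J] [Fintype α] [DecidableEq Q]
    {β : J → Q} {S : ℕ} (hβ : ∀ q, #{j | β j = q} = S) {F : Finset (ι × Q)}
    {T : Finset (ι → J → α)} (hT : ConstantOnBlocks β F T) :
    #T * (Fintype.card α ^ S) ^ #F ≤ Fintype.card α ^ (Fintype.card ι * Fintype.card J) := by
  classical
  rcases T.eq_empty_or_nonempty with rfl | ⟨y₀, hy₀⟩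
  · simp
  have hsub : T ⊆ Fintype.piFinset fun i => Fintype.piFinset fun j =>
      if (i, β j) ∈ F then {y₀ i j} else univ := fun y hy => by
    simp only [Fintype.mem_piFinset]
    intro i j
    split_ifs with hij
    · exact mem_singleton.2 (hT y hy y₀ hy₀ i j hij)
    · exact mem_univ _
  have hpow : (Fintype.card α ^ S) ^ #F =
      ∏ i, ∏ j, if (i, β j) ∈ F then Fintype.card α else 1 := by
    simp_rw [← pow_mul, ← sum_card_filter_mem_blocks hβ, ← prod_pow_eq_pow_sum,
      prod_ite, prod_const, one_pow, mul_one]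
  calc #T * (Fintype.card α ^ S) ^ #F
      ≤ (∏ i, ∏ j, if (i, β j) ∈ F then 1 else Fintype.card α) *
          ∏ i, ∏ j, if (i, β j) ∈ F then Fintype.card α else 1 := by
        rw [hpow]
        gcongr
        refine (card_le_card hsub).trans_eq ?_
        simp [Fintype.card_piFinset, apply_ite card]
    _ = ∏ _i : ι, ∏ _j : J, Fintype.card α := by
        simp_rw [← prod_mul_distrib]
        refine prod_congr rfl fun i _ => prod_congr rfl fun j _ => ?_
        split_ifs <;> simp
    _ = Fintype.card α ^ (Fintype.card ι * Fintype.card J) := by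
        simp [← pow_mul, mul_comm]

variable [DecidableEq ι] [DecidableEq Q]

/-- The part of the pointers `x` that has to be fixed so that every output `y i (x i)` is either
determined or lies in a known unfixed block: the pointer itself if its block is in `F`, and only
the name of its block otherwise. -/
def pointerKey (β : J → Q) (F : Finset (ι × Q)) (x : ι → J) :
    ι → Q ⊕ J :=
  fun i => if (i, β (x i)) ∈ F then .inr (x i) else .inl (β (x i))

lemma card_filter_mem_blocks_le [Fintype J] {β : J → Q} {S : ℕ}
    (hβ : ∀ q, #{j | β j = q} = S) (F : Finset (ι × Q)) (i : ι) :
    #{j | (i, β j) ∈ F} ≤ S * #F := by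
  refine (card_le_mul_card_image (f := fun j => (i, β j)) _ S fun b _ => ?_).trans ?_
  · refine le_of_le_of_eq (card_le_card fun j hj => ?_) (hβ b.2)
    simp [← (mem_filter.1 hj).2]
  · refine Nat.mul_le_mul_left S (card_le_card (image_subset_iff.2 fun j hj => ?_))
    exact (mem_filter.1 hj).2

lemma pointerKey_eq_iff {β : J → Q} {F : Finset (ι × Q)} {x x' : ι → J} :
    pointerKey β F x = pointerKey β F x' ↔
      ∀ i, β (x i) = β (x' i) ∧ ((i, β (x i)) ∈ F → x i = x' i) := by
  simp only [funext_iff, pointerKey]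
  refine forall_congr' fun i => ?_
  split_ifs <;> aesop

lemma card_image_pointerKey_le [Fintype ι] [Fintype J] [Fintype Q] [DecidableEq J] {β : J → Q}
    {S : ℕ} (hβ : ∀ q, #{j | β j = q} = S) (F : Finset (ι × Q)) (X : Finset (ι → J)) :
    #(X.image (pointerKey β F)) ≤ (Fintype.card Q + S * #F) ^ Fintype.card ι := by
  have hsub : X.image (pointerKey β F) ⊆
      Fintype.piFinset fun i => univ.disjSum {j | (i, β j) ∈ F} := by
    simp only [image_subset_iff, Fintype.mem_piFinset, pointerKey]
    intro x _ i
    split_ifs with hi <;> simp [hi]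
  refine (card_le_card hsub).trans ?_
  rw [Fintype.card_piFinset]
  refine prod_le_pow_card _ _ _ fun i _ => ?_
  rw [card_disjSum, card_univ]
  exact Nat.add_le_add_left (card_filter_mem_blocks_le hβ F i) _

end Blocks

section EssentiallyDense

variable {ι J : Type*}

/-- A uniformly random element of `X` takes any prescribed values on a nonempty set of `k`
coordinates with probability at most `c * ρ ^ k`. -/
def EssentiallyDense (c ρ : ℝ) (X : Finset (ι → J)) : Prop :=
  ∀ H : Finset ι, H.Nonempty → ∀ α : ι → J, ∀ T ⊆ X, (∀ x ∈ T, ∀ i ∈ H, x i = α i) →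
    (#T : ℝ) ≤ c * #X * ρ ^ #H

namespace EssentiallyDense

variable {c ρ : ℝ} {X : Finset (ι → J)}

lemma one_le_mul_pow [Fintype ι] [Nonempty ι] (h : EssentiallyDense c ρ X) (hX : X.Nonempty) :
    1 ≤ c * #X * ρ ^ Fintype.card ι := by
  obtain ⟨x, hx⟩ := hX
  simpa using h univ univ_nonempty x {x} (singleton_subset_iff.2 hx) (by simp)

lemma card_le_of_forall_mem (h : EssentiallyDense c ρ X) (hc : 0 ≤ c) (hρ : 0 ≤ ρ)
    {S : ι → Finset J} {s : ℕ} (hS : ∀ i, #(S i) ≤ s) {H : Finset ι} (hH : H.Nonempty)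
    {T : Finset (ι → J)} (hTX : T ⊆ X) (hT : ∀ x ∈ T, ∀ i ∈ H, x i ∈ S i) :
    (#T : ℝ) ≤ c * #X * (s * ρ) ^ #H := by
  classical
  let values : Finset (H → J) := Fintype.piFinset fun i => S i
  have hmaps : ∀ x ∈ T, H.restrict x ∈ values := fun x hx =>
    Fintype.mem_piFinset.2 fun i => hT x hx i i.2
  have hfiber (a : H → J) : (#{x ∈ T | H.restrict x = a} : ℝ) ≤ c * #X * ρ ^ #H := by
    rcases eq_empty_or_nonempty {x ∈ T | H.restrict x = a} with hempty | ⟨x₀, hx₀⟩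
    · rw [hempty, card_empty, Nat.cast_zero]
      positivity
    · refine h H hH x₀ _ ((filter_subset _ _).trans hTX) fun x hx i hi => ?_
      exact congrFun ((mem_filter.1 hx).2.trans (mem_filter.1 hx₀).2.symm) ⟨i, hi⟩
  calc (#T : ℝ)
      = ∑ a ∈ values, (#{x ∈ T | H.restrict x = a} : ℝ) := by
        exact_mod_cast card_eq_sum_card_fiberwise hmaps
    _ ≤ #values * (c * #X * ρ ^ #H) := by
        rw [← nsmul_eq_mul]
        exact sum_le_card_nsmul _ _ _ fun a _ => hfiber a
    _ ≤ s ^ #H * (c * #X * ρ ^ #H) := by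
        gcongr
        rw [Fintype.card_piFinset, ← Fintype.card_coe H, ← card_univ]
        exact_mod_cast prod_le_pow_card _ (fun i : H => #(S i)) _ fun i _ => hS i
    _ = c * #X * (s * ρ) ^ #H := by rw [mul_pow]; ring

lemma card_filter_half_mem_le [DecidableEq J] [Fintype ι] [Nonempty ι] (h : EssentiallyDense c ρ X)
    (hc : 0 ≤ c) (hρ : 0 ≤ ρ) {S : ι → Finset J} {s : ℕ} (hS : ∀ i, #(S i) ≤ s) {t : ℝ}
    (ht₀ : 0 ≤ t) (ht₁ : t ≤ 1) (hst : s * ρ ≤ t ^ 2) :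
    (#{x ∈ X | Fintype.card ι ≤ 2 * #{i | x i ∈ S i}} : ℝ) ≤ c * #X * (2 * t) ^ Fintype.card ι := by
  classical
  let halves : Finset (Finset ι) := {H | Fintype.card ι ≤ 2 * #H}
  have hcover : {x ∈ X | Fintype.card ι ≤ 2 * #{i | x i ∈ S i}} ⊆
      halves.biUnion fun H => {x ∈ X | ∀ i ∈ H, x i ∈ S i} := fun x hx => by
    rw [mem_filter] at hx
    simp only [mem_biUnion, mem_filter]
    exact ⟨({i | x i ∈ S i} : Finset ι), mem_filter.2 ⟨mem_univ _, hx.2⟩, hx.1,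
      fun i hi => (mem_filter.1 hi).2⟩
  have hhalf : ∀ H ∈ halves,
      (#{x ∈ X | ∀ i ∈ H, x i ∈ S i} : ℝ) ≤ c * #X * t ^ Fintype.card ι := fun H hH => by
    have hcardH : Fintype.card ι ≤ 2 * #H := (mem_filter.1 hH).2
    have hHne : H.Nonempty :=
      card_pos.1 <| Nat.pos_of_mul_pos_left <| Fintype.card_pos.trans_le hcardH
    calc (#{x ∈ X | ∀ i ∈ H, x i ∈ S i} : ℝ) ≤ c * #X * (s * ρ) ^ #H :=
          h.card_le_of_forall_mem hc hρ hS hHne (filter_subset _ _) fun x hx => (mem_filter.1 hx).2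
      _ ≤ c * #X * (t ^ 2) ^ #H := by gcongr
      _ = c * #X * t ^ (2 * #H) := by rw [pow_mul]
      _ ≤ c * #X * t ^ Fintype.card ι := by
          gcongr ?_ * ?_
          exact pow_le_pow_of_le_one ht₀ ht₁ hcardH
  calc (#{x ∈ X | Fintype.card ι ≤ 2 * #{i | x i ∈ S i}} : ℝ)
      ≤ ∑ H ∈ halves, (#{x ∈ X | ∀ i ∈ H, x i ∈ S i} : ℝ) := by
        exact_mod_cast (card_le_card hcover).trans card_biUnion_le
    _ ≤ #halves * (c * #X * t ^ Fintype.card ι) := by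
        rw [← nsmul_eq_mul]
        exact sum_le_card_nsmul _ _ _ hhalf
    _ ≤ 2 ^ Fintype.card ι * (c * #X * t ^ Fintype.card ι) := by
        gcongr
        rw [← Nat.cast_two, ← Nat.cast_pow, Nat.cast_le, ← Fintype.card_finset]
        exact card_le_univ halves
    _ = c * #X * (2 * t) ^ Fintype.card ι := by rw [mul_pow]; ring

end EssentiallyDense

end EssentiallyDense

section Focused

lemma card_filter_bucket_eq {n : ℕ} (q : Fin (n ^ 128)) : #{j | bucket n j = q} = n ^ 128 := by
  have hpos : 0 < n ^ 128 := q.pos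
  have hbucket : ({j | bucket n j = q} : Finset _).map Fin.valEmbedding =
      Ico (n ^ 128 * q) (n ^ 128 * q + n ^ 128) := by
    ext k
    simp only [mem_map, mem_filter, mem_univ, true_and, mem_Ico,
      Fin.valEmbedding_apply, bucket, Fin.ext_iff]
    constructor
    · rintro ⟨j, hj, rfl⟩
      rw [← hj]
      exact ⟨Nat.mul_div_le _ _, Nat.lt_mul_div_succ _ hpos⟩
    · rintro ⟨hle, hlt⟩
      have hk : k < n ^ 256 := by
        have := Nat.mul_le_mul_left (n ^ 128) q.2
        rw [Nat.mul_succ] at this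
        exact (hlt.trans_le this).trans_eq (by ring)
      exact ⟨⟨k, hk⟩, Nat.div_eq_of_lt_le (by lia) (by lia), rfl⟩
  rw [← card_map Fin.valEmbedding, hbucket, Nat.card_Ico, Nat.add_sub_cancel_left]

/-- The density that blocks of `n ^ 128` bits are kept to. It exceeds the density of a uniformly
random block by the factor `2 ^ (1 / n)`, so that up to `n` blocks lose a factor `2` altogether. -/
noncomputable def blockDensity (n : ℕ) : ℝ :=
  2 ^ (n : ℝ)⁻¹ / 2 ^ (n ^ 128)

lemma blockDensity_pos (n : ℕ) : 0 < blockDensity n := by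
  unfold blockDensity; positivity

lemma blockDensity_pow_le {n p : ℕ} (hp : p ≤ n) :
    blockDensity n ^ p ≤ 2 * (2 : ℝ) ^ (-((p : ℝ) * ((n ^ 128 : ℕ) : ℝ))) := by
  have hexp : (n : ℝ)⁻¹ * p ≤ 1 := by
    rw [inv_mul_eq_div]
    exact div_le_one_of_le₀ (by exact_mod_cast hp) (Nat.cast_nonneg n)
  rw [blockDensity, div_pow, ← Real.rpow_mul_natCast zero_le_two, ← pow_mul, mul_comm (n ^ 128),
    Real.rpow_neg zero_le_two, ← Nat.cast_mul, Real.rpow_natCast, div_eq_mul_inv]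
  gcongr
  exact Real.rpow_le_self_of_one_le one_le_two hexp

lemma inv_pow_mul_le_rpow_neg {n p k : ℕ} (hn : 1 ≤ n) (hp : p ≤ k) :
    ((n : ℝ) ^ (52 * k))⁻¹ ≤ ((n ^ 128 : ℕ) : ℝ) ^ (-(0.4 * (p : ℝ))) := by
  have hn' : (1 : ℝ) ≤ n := by exact_mod_cast hn
  have hp' : (p : ℝ) ≤ k := by exact_mod_cast hp
  rw [← Real.rpow_natCast, ← Real.rpow_neg (Nat.cast_nonneg n), Nat.cast_pow,
    ← Real.rpow_natCast, ← Real.rpow_mul (Nat.cast_nonneg n)]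
  refine Real.rpow_le_rpow_of_exponent_le hn' ?_
  push_cast
  linarith

lemma focused_uniformMass {n : ℕ} (hn : 1 ≤ n) {I : Finset (Fin n)} {P : Finset (I → Fin (n ^ 256))}
    {Z : Finset (I → Fin (n ^ 256) → Bool)} {F : Finset (I × Fin (n ^ 128))} (hZ : Z.Nonempty)
    (hconst : ConstantOnBlocks (bucket n) F Z)
    (hdense : BlockDense (bucket n) (blockDensity n) F Z)
    {x₀ : I → Fin (n ^ 256)}
    (hkey : ∀ x ∈ P, pointerKey (bucket n) F x = pointerKey (bucket n) F x₀)
    (hfree : #I ≤ 2 * #{i | (i, bucket n (x₀ i)) ∉ F}) (hcard : (n : ℝ) ^ (52 * #I) ≤ #P) :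
    Focused n I (uniformMass P) (uniformMass Z) := by
  obtain ⟨y₀, hy₀⟩ := hZ
  have hkey' (x) (hx : x ∈ P) := pointerKey_eq_iff.1 (hkey x hx).symm
  let σ : I → Option Bool := fun i =>
    if (i, bucket n (x₀ i)) ∈ F then some (y₀ i (x₀ i)) else none
  have hσ : ∀ i, σ i = none ↔ (i, bucket n (x₀ i)) ∉ F := by simp [σ]
  have hσI : #{i | σ i = none} ≤ #I := by simpa using card_filter_le univ (σ · = none)
  refine ⟨σ, fun i => bucket n (x₀ i), ?_, fun x hx y hy i b hb => ?_,
    fun x hx i _ => ((hkey' x (mem_of_uniformMass_ne_zero hx)) i).1.symm, fun a => ?_, fun γ => ?_⟩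
  · simpa only [hσ] using hfree
  · have hi : (i, bucket n (x₀ i)) ∈ F := by_contra fun h => by simp [(hσ i).2 h] at hb
    rw [← (hkey' x (mem_of_uniformMass_ne_zero hx) i).2 hi,
      hconst y (mem_of_uniformMass_ne_zero hy) y₀ hy₀ i (x₀ i) hi]
    simpa [σ, hi] using hb
  · refine (sum_filter_uniformMass_le_inv_card fun x hx x' hx' hxa hxa' => funext fun i => ?_).trans
      ((inv_anti₀ (by positivity) hcard).trans (inv_pow_mul_le_rpow_neg hn hσI))
    by_cases hi : (i, bucket n (x₀ i)) ∈ F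
    · exact ((hkey' x hx i).2 hi).symm.trans ((hkey' x' hx' i).2 hi)
    · exact (hxa i ((hσ i).2 hi)).trans (hxa' i ((hσ i).2 hi)).symm
  · exact (hdense.sum_filter_uniformMass_le (blockDensity_pos n).le (fun i => (hσ i).1) γ).trans
      (blockDensity_pow_le (hσI.trans (by simpa using card_le_univ I)))

end Focused

section Restored

variable {n : ℕ} {I : Finset (Fin n)}

/-- Structure of a piece of `Y` after density restoration: at most `n ^ 5` blocks of the tables in
`Z` are fixed, and the other ones are dense. -/
def IsRestored (n : ℕ) (I : Finset (Fin n)) (Z : Finset (I → Fin (n ^ 256) → Bool)) : Prop :=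
  Z.Nonempty ∧ ∃ F : Finset (I × Fin (n ^ 128)), #F ≤ n ^ 5 ∧
    ConstantOnBlocks (bucket n) F Z ∧ BlockDense (bucket n) (blockDensity n) F Z

lemma card_image_pointerKey_bucket_le (hn : 2 ≤ n) {F : Finset (I × Fin (n ^ 128))}
    (hF : #F ≤ n ^ 5) (X : Finset (I → Fin (n ^ 256))) :
    (#(X.image (pointerKey (bucket n) F)) : ℝ) ≤ ((n : ℝ) ^ #I) ^ 134 := by
  have hbase : n ^ 128 + n ^ 128 * #F ≤ n ^ 134 := by
    have hpos : 1 ≤ n ^ 5 := Nat.one_le_pow _ _ (by lia)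
    calc n ^ 128 + n ^ 128 * #F ≤ n ^ 128 * (n ^ 5 * 2) := by nlinarith [Nat.zero_le (n ^ 128)]
      _ ≤ n ^ 128 * (n ^ 5 * n) := by gcongr
      _ = n ^ 134 := by ring
  have hcard := card_image_pointerKey_le card_filter_bucket_eq F X
  rw [Fintype.card_fin, Fintype.card_coe] at hcard
  rw [pow_right_comm]
  exact_mod_cast hcard.trans (Nat.pow_le_pow_left hbase _)

lemma sixteen_le_pow_card (hn : 16 ≤ n) (hI : I.Nonempty) : (16 : ℝ) ≤ (n : ℝ) ^ #I := by
  exact_mod_cast hn.trans (Nat.le_self_pow hI.card_ne_zero n)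

lemma EssentiallyDense.card_half_mem_blocks_le (hn : 16 ≤ n) (hI : I.Nonempty)
    {X : Finset (I → Fin (n ^ 256))} (hX : EssentiallyDense 2 ((n : ℝ) ^ 230)⁻¹ X)
    {F : Finset (I × Fin (n ^ 128))} (hF : #F ≤ n ^ 5) :
    (#{x ∈ X | #I ≤ 2 * #{i | (i, bucket n (x i)) ∈ F}} : ℝ) ≤
      1 / 8 * (((n : ℝ) ^ #I) ^ 5)⁻¹ * #X := by
  have : Nonempty I := hI.to_subtype
  have hn' : (16 : ℝ) ≤ n := by exact_mod_cast hn
  have hS (i : I) : #{j | (i, bucket n j) ∈ F} ≤ n ^ 133 :=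
    (card_filter_mem_blocks_le card_filter_bucket_eq F i).trans <|
      (Nat.mul_le_mul_left _ hF).trans_eq (by ring)
  have hst : ((n ^ 133 : ℕ) : ℝ) * ((n : ℝ) ^ 230)⁻¹ ≤ (((n : ℝ) ^ 40)⁻¹) ^ 2 := by
    rw [Nat.cast_pow, ← div_eq_mul_inv, div_le_iff₀ (by positivity), inv_pow, ← pow_mul,
      inv_mul_eq_div, le_div_iff₀ (by positivity), ← pow_add]
    exact pow_le_pow_right₀ (by linarith) (by norm_num)
  have hhalf := hX.card_filter_half_mem_le zero_le_two (by positivity) hS (by positivity)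
    (inv_le_one_of_one_le₀ (one_le_pow₀ (by linarith))) hst
  simp only [mem_filter, mem_univ, true_and, Fintype.card_coe] at hhalf
  rw [mul_pow, inv_pow, pow_right_comm] at hhalf
  refine hhalf.trans ?_
  set w : ℝ := (n : ℝ) ^ #I
  have hw16 : 16 ≤ w := sixteen_le_pow_card hn hI
  have htwo : (2 : ℝ) ^ #I ≤ w := pow_le_pow_left₀ zero_le_two (by linarith) _
  have hpow : 16 * w * w ^ 5 ≤ w ^ 40 :=
    calc 16 * w * w ^ 5 ≤ w * w * w ^ 5 := by gcongr
      _ = w ^ 7 := by ring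
      _ ≤ w ^ 40 := pow_le_pow_right₀ (by linarith) (by norm_num)
  calc 2 * #X * (2 ^ #I * (w ^ 40)⁻¹) ≤ 2 * #X * (w * (16 * w * w ^ 5)⁻¹) := by gcongr
    _ = 1 / 8 * (w ^ 5)⁻¹ * #X := by field_simp; ring

-- The left side bounds the mass lost when the parts smaller than `n ^ (52 * #I)` are given up:
-- there are at most `n ^ 134` keys per coordinate, and focus needs `52 ≥ 0.4 * 128`.
lemma EssentiallyDense.pow_key_mul_pow_threshold_le (hn : 16 ≤ n) (hI : I.Nonempty)
    {X : Finset (I → Fin (n ^ 256))} (hX : EssentiallyDense 2 ((n : ℝ) ^ 230)⁻¹ X)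
    (hXne : X.Nonempty) :
    ((n : ℝ) ^ #I) ^ 134 * (n : ℝ) ^ (52 * #I) ≤ 1 / 8 * (((n : ℝ) ^ #I) ^ 5)⁻¹ * #X := by
  have : Nonempty I := hI.to_subtype
  have hlarge := hX.one_le_mul_pow hXne
  rw [Fintype.card_coe, inv_pow, pow_right_comm] at hlarge
  rw [mul_comm 52, pow_mul]
  set w : ℝ := (n : ℝ) ^ #I
  have hw16 : 16 ≤ w := sixteen_le_pow_card hn hI
  rw [← div_eq_mul_inv, one_le_div (by positivity)] at hlarge
  have hpow : 16 * w ^ 191 ≤ w ^ 230 :=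
    calc 16 * w ^ 191 ≤ w * w ^ 191 := by gcongr
      _ = w ^ 192 := by ring
      _ ≤ w ^ 230 := pow_le_pow_right₀ (by linarith) (by norm_num)
  calc w ^ 134 * w ^ 52 = 1 / 16 * (w ^ 5)⁻¹ * (16 * w ^ 191) := by field_simp
    _ ≤ 1 / 16 * (w ^ 5)⁻¹ * (2 * #X) :=
        mul_le_mul_of_nonneg_left (hpow.trans hlarge) (by positivity)
    _ = 1 / 8 * (w ^ 5)⁻¹ * #X := by ring

open Classical in
theorem EssentiallyDense.exists_finpartition_focused (hn : 16 ≤ n) (hI : I.Nonempty)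
    {X : Finset (I → Fin (n ^ 256))} (hX : EssentiallyDense 2 ((n : ℝ) ^ 230)⁻¹ X)
    (hXne : X.Nonempty) {Z : Finset (I → Fin (n ^ 256) → Bool)} (hZ : IsRestored n I Z) :
    ∃ 𝒳 : Finpartition X,
      ∑ P ∈ 𝒳.parts with ¬ Focused n I (uniformMass P) (uniformMass Z), (#P : ℝ) ≤
        1 / 4 * (((n : ℝ) ^ #I) ^ 5)⁻¹ * #X := by
  obtain ⟨hZne, F, hF, hconst, hdense⟩ := hZ
  obtain ⟨𝒳, h𝒳card, h𝒳key⟩ := exists_finpartition_of_fibers (pointerKey (bucket n) F) X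
  let crowded : Finset (I → Fin (n ^ 256)) :=
    {x ∈ X | #I ≤ 2 * #{i | (i, bucket n (x i)) ∈ F}}
  have hfocused : ∀ P ∈ 𝒳.parts, (n : ℝ) ^ (52 * #I) ≤ #P → ¬ P ⊆ crowded →
      Focused n I (uniformMass P) (uniformMass Z) := fun P hP hcard hPc => by
    obtain ⟨x₀, hx₀, hx₀c⟩ := not_subset.1 hPc
    refine focused_uniformMass (by lia) hZne hconst hdense
      (fun x hx => h𝒳key P hP x hx x₀ hx₀) ?_ hcard
    have hcount := card_filter_add_card_filter_not (s := (univ : Finset I))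
      fun i => (i, bucket n (x₀ i)) ∈ F
    simp only [crowded, mem_filter, 𝒳.subset hP hx₀, true_and, not_le,
      card_univ, Fintype.card_coe] at hx₀c hcount
    lia
  refine ⟨𝒳, (sum_card_parts_not_le 𝒳 (by positivity) hfocused).trans ?_⟩
  calc (#𝒳.parts * (n : ℝ) ^ (52 * #I) + #crowded : ℝ)
      ≤ ((n : ℝ) ^ #I) ^ 134 * (n : ℝ) ^ (52 * #I) + #crowded := by
        gcongr
        refine le_trans ?_ (card_image_pointerKey_bucket_le (by lia) hF X)
        exact_mod_cast h𝒳card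
    _ ≤ 1 / 8 * (((n : ℝ) ^ #I) ^ 5)⁻¹ * #X + 1 / 8 * (((n : ℝ) ^ #I) ^ 5)⁻¹ * #X :=
        add_le_add (hX.pow_key_mul_pow_threshold_le hn hI hXne)
          (hX.card_half_mem_blocks_le hn hI hF)
    _ = 1 / 4 * (((n : ℝ) ^ #I) ^ 5)⁻¹ * #X := by ring

lemma exists_isRestored_subset (hn : 1 ≤ n) {Z : Finset (I → Fin (n ^ 256) → Bool)}
    (hZ : (2 : ℝ) ^ (#I * n ^ 256) ≤ #Z * 2 ^ (n ^ 4)) : ∃ Z' ⊆ Z, IsRestored n I Z' := by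
  obtain ⟨F, Z', hZ'Z, hconst, hcard, hdense⟩ :=
    exists_subset_blockDense (bucket n) (blockDensity_pos n).le Z
  have hZpos : (0 : ℝ) < #Z :=
    pos_of_mul_pos_left (lt_of_lt_of_le (by positivity) hZ) (by positivity)
  have hZ'pos : (0 : ℝ) < #Z' :=
    (mul_pos hZpos (pow_pos (blockDensity_pos n) _)).trans_le hcard
  refine ⟨Z', hZ'Z, card_pos.1 (by exact_mod_cast hZ'pos), F, ?_, hconst, hdense⟩
  have hsmall : (#Z' : ℝ) * (2 ^ n ^ 128) ^ #F ≤ 2 ^ (#I * n ^ 256) := by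
    have := hconst.card_mul_pow_le card_filter_bucket_eq
    rw [Fintype.card_bool, Fintype.card_coe, Fintype.card_fin] at this
    exact_mod_cast this
  set θ : ℝ := 2 ^ (n : ℝ)⁻¹ with hθ
  have hθ1 : 1 < θ := Real.one_lt_rpow one_lt_two (by positivity)
  have hθn : θ ^ n = 2 := Real.rpow_inv_natCast_pow zero_le_two (by lia)
  refine (pow_le_pow_iff_right₀ hθ1).1 (le_of_mul_le_mul_left ?_ hZpos)
  calc #Z * θ ^ #F = #Z * blockDensity n ^ #F * (2 ^ n ^ 128) ^ #F := by
        rw [blockDensity, ← hθ, div_pow]; field_simp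
    _ ≤ #Z' * (2 ^ n ^ 128) ^ #F := by gcongr
    _ ≤ #Z * 2 ^ n ^ 4 := hsmall.trans hZ
    _ = #Z * θ ^ n ^ 5 := by rw [← hθn, ← pow_mul]; ring

lemma pow_card_pow_le_two_pow (I : Finset (Fin n)) : ((n : ℝ) ^ #I) ^ 5 ≤ 2 ^ (5 * n ^ 2) := by
  have hIn : #I ≤ n := by simpa using card_le_univ I
  have hn : (n : ℝ) ≤ 2 ^ n := by exact_mod_cast Nat.lt_two_pow_self.le
  calc ((n : ℝ) ^ #I) ^ 5 ≤ (((2 : ℝ) ^ n) ^ #I) ^ 5 := by gcongr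
    _ = 2 ^ (5 * (n * #I)) := by rw [← pow_mul, ← pow_mul]; ring
    _ ≤ 2 ^ (5 * n ^ 2) := by
        gcongr
        · norm_num
        · nlinarith

open Classical in
theorem exists_finpartition_isRestored (hn : 16 ≤ n) {Y : Finset (I → Fin (n ^ 256) → Bool)}
    (hY : (2 : ℝ) ^ (#I * n ^ 256) ≤ #Y * 2 ^ (n ^ 3 + 1)) :
    ∃ 𝒴 : Finpartition Y, ∑ Z ∈ 𝒴.parts with ¬ IsRestored n I Z, (#Z : ℝ) ≤
      1 / 4 * (((n : ℝ) ^ #I) ^ 5)⁻¹ * #Y := by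
  refine exists_finpartition_sum_card_le fun Z _ hZ => ?_
  have hexp : 2 + 5 * n ^ 2 + (n ^ 3 + 1) ≤ n ^ 4 := by
    have h₃ : 16 * n ^ 3 ≤ n ^ 4 := (Nat.mul_le_mul_right _ hn).trans_eq (by ring)
    have h₂ : 16 * n ^ 2 ≤ n ^ 3 := (Nat.mul_le_mul_right _ hn).trans_eq (by ring)
    have h₁ : 16 * 16 ≤ n ^ 2 := (Nat.mul_le_mul hn hn).trans_eq (by ring)
    lia
  have hlarge : (#Y : ℝ) ≤ #Z * (4 * ((n : ℝ) ^ #I) ^ 5) := by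
    calc (#Y : ℝ) = 1 / 4 * (((n : ℝ) ^ #I) ^ 5)⁻¹ * #Y * (4 * ((n : ℝ) ^ #I) ^ 5) := by
          field_simp
      _ ≤ #Z * (4 * ((n : ℝ) ^ #I) ^ 5) := by gcongr
  obtain ⟨Z', hZ'Z, hZ'⟩ := exists_isRestored_subset (by lia : 1 ≤ n) <|
    calc (2 : ℝ) ^ (#I * n ^ 256) ≤ #Y * 2 ^ (n ^ 3 + 1) := hY
      _ ≤ #Z * (4 * 2 ^ (5 * n ^ 2)) * 2 ^ (n ^ 3 + 1) := by
          gcongr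
          exact hlarge.trans (by gcongr; exact pow_card_pow_le_two_pow I)
      _ = #Z * 2 ^ (2 + 5 * n ^ 2 + (n ^ 3 + 1)) := by rw [pow_add, pow_add]; ring
      _ ≤ #Z * 2 ^ n ^ 4 := by
          gcongr
          exact one_le_two
  exact ⟨Z', hZ'Z, hZ'.1, hZ'⟩

end Restored

section Hypotheses

variable {n : ℕ}

open Classical in
lemma essentiallyDense_of_card_filter_le_rpow {ι J : Type*} (hn : 1 ≤ n) {X : Finset (ι → J)}
    (hX : ∀ H : Finset ι, H.Nonempty → ∀ α : ι → J, (#{x ∈ X | ∀ i ∈ H, x i = α i} : ℝ) ≤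
      2 * #X * ((n ^ 256 : ℕ) : ℝ) ^ (-(0.9 * (#H : ℝ)))) :
    EssentiallyDense 2 ((n : ℝ) ^ 230)⁻¹ X := fun H hH α T hTX hT => by
  have hn' : (1 : ℝ) ≤ n := by exact_mod_cast hn
  have hexp : ((n ^ 256 : ℕ) : ℝ) ^ (-(0.9 * (#H : ℝ))) ≤ ((n : ℝ) ^ 230)⁻¹ ^ #H := by
    rw [inv_pow, ← pow_mul, Nat.cast_pow, ← Real.rpow_natCast, ← Real.rpow_natCast,
      ← Real.rpow_mul n.cast_nonneg, ← Real.rpow_neg n.cast_nonneg]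
    refine Real.rpow_le_rpow_of_exponent_le hn' ?_
    push_cast
    linarith [Nat.cast_nonneg (α := ℝ) #H]
  calc (#T : ℝ) ≤ #{x ∈ X | ∀ i ∈ H, x i = α i} := by
        gcongr
        exact fun x hx => mem_filter.2 ⟨hTX hx, hT x hx⟩
    _ ≤ 2 * #X * ((n ^ 256 : ℕ) : ℝ) ^ (-(0.9 * (#H : ℝ))) := hX H hH α
    _ ≤ 2 * #X * ((n : ℝ) ^ 230)⁻¹ ^ #H := by gcongr

lemma two_pow_le_mul_two_pow_of_sub_logb_le {a b c : ℕ} (hc : 0 < c)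
    (h : (a : ℝ) - Real.logb 2 c ≤ b) : (2 : ℝ) ^ a ≤ c * 2 ^ b := by
  have hc' : (0 : ℝ) < c := by exact_mod_cast hc
  rw [← Real.logb_le_logb one_lt_two (by positivity) (by positivity),
    Real.logb_mul hc'.ne' (by positivity), Real.logb_pow, Real.logb_pow,
    Real.logb_self_eq_one one_lt_two]
  linarith

lemma rpow_neg_five_mul (n k : ℕ) : (n : ℝ) ^ (-(5 * (k : ℝ))) = (((n : ℝ) ^ k) ^ 5)⁻¹ := by
  rw [Real.rpow_neg n.cast_nonneg, ← pow_mul, ← Real.rpow_natCast]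
  push_cast
  rw [mul_comm]

end Hypotheses

open Classical in
/-- **Focused decomposition lemma.** There is `N` such that for all `n ≥ N`
(with `m = n^256`): if `I ⊆ [n]` is nonempty, `X ⊆ [m]^I` is nonempty and
0.9-essentially-dense, and `Y ⊆ ({0,1}^m)^I` is nonempty with
`|I|·m − log₂|Y| ≤ n³ + 1`, then the uniform distribution on `X × Y` is a finite mixture
`Σ_d μ(d)·(x^d × y^d)` of product distributions such that the total mixture weight on
focused products is at least `1 − (1/2)·n^(−5|I|)`. -/
theorem focused_decomposition :
    ∃ N : ℕ, ∀ n : ℕ, N ≤ n →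
    ∀ I : Finset (Fin n), I.Nonempty →
    ∀ X : Finset ({i // i ∈ I} → Fin (n ^ 256)), X.Nonempty →
      -- X is 0.9-essentially-dense
      (∀ H : Finset {i // i ∈ I}, H.Nonempty → ∀ α : {i // i ∈ I} → Fin (n ^ 256),
        ((X.filter fun x => ∀ i ∈ H, x i = α i).card : ℝ) ≤
          2 * (X.card : ℝ) * ((n ^ 256 : ℕ) : ℝ) ^ (-(0.9 * (H.card : ℝ)))) →
    ∀ Y : Finset ({i // i ∈ I} → Fin (n ^ 256) → Bool), Y.Nonempty →
      -- deficiency of Y at most n³ + 1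
      ((I.card : ℝ) * ((n ^ 256 : ℕ) : ℝ) - Real.logb 2 (Y.card : ℝ) ≤ (n : ℝ) ^ 3 + 1) →
      ∃ (k : ℕ) (μ : Fin k → ℝ)
        (px : Fin k → (({i // i ∈ I} → Fin (n ^ 256)) → ℝ))
        (py : Fin k → (({i // i ∈ I} → Fin (n ^ 256) → Bool) → ℝ)),
        (∀ d, 0 ≤ μ d) ∧ (∑ d, μ d = 1) ∧
        (∀ d a, 0 ≤ px d a) ∧ (∀ d, ∑ a, px d a = 1) ∧
        (∀ d b, 0 ≤ py d b) ∧ (∀ d, ∑ b, py d b = 1) ∧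
        -- the mixture equals the uniform distribution on X × Y
        (∀ a b, ∑ d, μ d * (px d a * py d b) =
          if a ∈ X ∧ b ∈ Y then 1 / ((X.card : ℝ) * (Y.card : ℝ)) else 0) ∧
        -- the mixture weight of focused products is at least 1 − (1/2)·n^(−5|I|)
        (1 - (1 / 2) * (n : ℝ) ^ (-(5 * (I.card : ℝ))) ≤
          ∑ d, if Focused n I (px d) (py d) then μ d else 0) := by
  refine ⟨16, fun n hn I hI X hXne hX Y hYne hY => ?_⟩
  have hdense : EssentiallyDense 2 ((n : ℝ) ^ 230)⁻¹ X :=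
    essentiallyDense_of_card_filter_le_rpow (by lia) fun H hH α => by convert hX H hH α
  have hdeficiency : (2 : ℝ) ^ (#I * n ^ 256) ≤ #Y * 2 ^ (n ^ 3 + 1) :=
    two_pow_le_mul_two_pow_of_sub_logb_le hYne.card_pos (by exact_mod_cast hY)
  obtain ⟨𝒴, h𝒴⟩ := exists_finpartition_isRestored hn hdeficiency
  have hfocus (Z : Finset (I → Fin (n ^ 256) → Bool)) : ∃ 𝒳 : Finpartition X, IsRestored n I Z →
      ∑ P ∈ 𝒳.parts with ¬ Focused n I (uniformMass P) (uniformMass Z), (#P : ℝ) ≤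
        1 / 4 * (((n : ℝ) ^ #I) ^ 5)⁻¹ * #X := by
    by_cases hZ : IsRestored n I Z
    · exact (hdense.exists_finpartition_focused hn hI hXne hZ).imp fun _ h _ => h
    · exact ⟨⊤, fun h => absurd h hZ⟩
  choose 𝒳 h𝒳 using hfocus
  have hbad := sum_parts_card_mul_card_not_le 𝒴 𝒳 (by positivity) h𝒴 h𝒳
  obtain ⟨k, μ, px, py, hμ, hμ1, hpx, hpx1, hpy, hpy1, hmix, hgood⟩ :=
    exists_mixture_of_finpartition hXne hYne 𝒴 𝒳 (Focused n I)
      (ε := 1 / 2 * (n : ℝ) ^ (-(5 * (#I : ℝ)))) <|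
      hbad.trans_eq (by rw [rpow_neg_five_mul]; ring)
  refine ⟨k, μ, px, py, hμ, hμ1, hpx, hpx1, hpy, hpy1, fun a b => ?_, ?_⟩
  · rw [hmix, uniformMass_mul_uniformMass]
  · rwa [sum_filter] at hgood
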